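/- Let A be a complex unital semisimple Banach algebra, let B be a complex unital Banach algebra possessing a separating family of finite-dimensional irreducible representations, and let T : A → B be a linear, unital, surjective map satisfying ρ(T(a)) = ρ(a) for every a ∈ A. For a fixed a ∈ A, let A₁ = {a}^{cc} be the double commutant of a in A (the set of all elements of A commuting with every element of A that commutes with a). Then B₁ := T(A₁) is a closed (unital) subalgebra of B; in particular B₁ is closed under multiplication. -/

import Mathlib

section PrimeRing

variable {R : Type*} [Ring R]

/-- In a prime ring without 2-torsion, `p c q + q c p = 0` for all `c` forces `p = 0` or `q = 0`. -/
theorem eq_zero_or_eq_zero_of_forall_mul_mul_add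
    (h2 : ∀ x : R, x + x = 0 → x = 0)
    (hprime : ∀ p q : R, (∀ c, p * c * q = 0) → p = 0 ∨ q = 0)
    {p q : R} (h : ∀ c, p * c * q + q * c * p = 0) : p = 0 ∨ q = 0 := by
  have key : ∀ c c', q * c * (q * c' * p) = 0 := by
    intro c c'
    apply h2
    have e1 := congrArg (· * (c' * q)) (h c)
    have e2 := congrArg (q * c * ·) (h c')
    have e3 := h (c * q * c')
    simp only [zero_mul, mul_zero] at e1 e2
    linear_combination (norm := noncomm_ring) e3 - e1 + e2
  by_cases hq : q = 0
  · exact Or.inr hq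
  · refine (hprime q p fun c' => ?_).symm.imp_right fun hq' => absurd hq' hq
    exact (hprime q _ fun c => key c c').resolve_left hq

/-- Jordan derivations of prime rings without 2-torsion are derivations (Herstein). -/
theorem jordan_derivation_map_mul
    (h2 : ∀ x : R, x + x = 0 → x = 0)
    (hprime : ∀ p q : R, (∀ c, p * c * q = 0) → p = 0 ∨ q = 0)
    (D : R →+ R) (hD : ∀ a, D (a * a) = D a * a + a * D a) (a b : R) :
    D (a * b) = D a * b + a * D b := by
  have J1 : ∀ a b, D (a * b) + D (b * a) = D a * b + a * D b + D b * a + b * D a := by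
    intro a b
    have h := hD (a + b)
    simp only [add_mul, mul_add, map_add] at h
    linear_combination (norm := noncomm_ring) h - hD a - hD b
  have J2 : ∀ a b, D (a * b * a) = D a * b * a + a * D b * a + a * b * D a := by
    intro a b
    have h1 := J1 a (a * b + b * a)
    have h3 := J1 (a * a) b
    have h4 := congrArg (· * a) (J1 a b)
    have h5 := congrArg (a * ·) (J1 a b)
    have h6 := congrArg (· * b) (hD a)
    have h7 := congrArg (b * ·) (hD a)
    simp only [mul_add, add_mul, map_add, ← mul_assoc] at h1 h3 h4 h5 h6 h7
    rw [← sub_eq_zero]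
    apply h2
    linear_combination (norm := noncomm_ring) h1 - h3 + h4 + h5 - h6 - h7
  have J3 : ∀ a b c, D (a * b * c) + D (c * b * a) =
      D a * b * c + a * D b * c + a * b * D c + D c * b * a + c * D b * a + c * b * D a := by
    intro a b c
    have h := J2 (a + c) b
    simp only [add_mul, mul_add, map_add] at h
    linear_combination (norm := noncomm_ring) h - J2 a b - J2 c b
  set δ : R → R → R := fun a b => D (a * b) - D a * b - a * D b with hδ
  have δ_swap : ∀ a b, δ b a = - δ a b := by
    intro a b
    linear_combination (norm := (simp only [hδ]; noncomm_ring)) J1 a b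
  have δ_or : ∀ a b, δ a b = 0 ∨ a * b - b * a = 0 := by
    intro a b
    apply eq_zero_or_eq_zero_of_forall_mul_mul_add h2 hprime
    intro c
    have h1 := J3 (a * b) c (b * a)
    have h3 := J2 a (b * c * b)
    have h4 := J2 b (a * c * a)
    rw [J2 b c] at h3
    rw [J2 a c] at h4
    have h5 : D (b * a) = D a * b + a * D b + D b * a + b * D a - D (a * b) := by
      linear_combination (norm := noncomm_ring) J1 a b
    rw [h5] at h1
    simp only [← mul_assoc] at h1 h3 h4
    simp only [hδ]
    linear_combination (norm := noncomm_ring) h1 - h3 - h4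
  have δ_add_left : ∀ a a' b, δ (a + a') b = δ a b + δ a' b := by
    intro a a' b
    simp only [hδ, add_mul, map_add]
    abel
  have δ_add_right : ∀ a b b', δ a (b + b') = δ a b + δ a b' := by
    intro a b b'
    simp only [hδ, mul_add, map_add]
    abel
  have δ_of_noncentral : ∀ a b₀, a * b₀ - b₀ * a ≠ 0 → ∀ b, δ a b = 0 := by
    intro a b₀ h₀ b
    rcases δ_or a b with h | h
    · exact h
    · have h1 : δ a b₀ = 0 := (δ_or a b₀).resolve_right h₀
      have h3 : δ a (b + b₀) = 0 := by
        refine (δ_or a (b + b₀)).resolve_right fun h' => h₀ ?_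
        linear_combination (norm := noncomm_ring) h' - h
      rwa [δ_add_right, h1, add_zero] at h3
  have δ_zero : δ a b = 0 := by
    by_cases hcomm : ∃ a₀ b₀ : R, a₀ * b₀ - b₀ * a₀ ≠ 0
    · obtain ⟨a₀, b₀, h₀⟩ := hcomm
      by_cases ha : a * b₀ - b₀ * a = 0
      · have h1 := δ_of_noncentral (a + a₀) b₀ (by
          intro h'
          apply h₀
          linear_combination (norm := noncomm_ring) h' - ha) b
        rwa [δ_add_left, δ_of_noncentral a₀ b₀ h₀ b, add_zero] at h1
      · exact δ_of_noncentral a b₀ ha b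
    · push Not at hcomm
      have hc : ∀ x y : R, x * y = y * x := fun x y => sub_eq_zero.1 (hcomm x y)
      apply h2
      have h1 := δ_swap a b
      have h3 : δ b a = δ a b := by
        simp only [hδ]
        rw [hc b a, hc (D b) a, hc b (D a)]
        abel
      rw [h3] at h1
      linear_combination (norm := noncomm_ring) h1
  simp only [hδ] at δ_zero
  exact sub_eq_zero.1 (by rw [← sub_sub]; exact δ_zero)

/-- Comparing the two expansions of `β (x u) (y v)` for a biderivation `β`. -/
theorem commutator_mul_biderivation (β : R → R → R)
    (hl : ∀ x y z, β (x * y) z = β x z * y + x * β y z)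
    (hr : ∀ x y z, β z (x * y) = β z x * y + x * β z y) (x y z u v : R) :
    (x * y - y * x) * z * β u v = β x y * z * (u * v - v * u) := by
  have key : ∀ u, (x * y - y * x) * β u v = β x y * (u * v - v * u) := by
    intro u
    have h := hr y v (x * u)
    simp only [hl, hr, add_mul, mul_add] at h
    linear_combination (norm := noncomm_ring) h
  have h1 := key (z * u)
  have h3 := congrArg (· * u) (key z)
  simp only [hl] at h1 h3
  linear_combination (norm := noncomm_ring) h1 - h3

end PrimeRing

section MatrixBracket

variable {n : ℕ}

theorem Matrix.eq_zero_or_eq_zero_of_forall_mul_mul_eq_zero {p q : Matrix (Fin n) (Fin n) ℂ}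
    (h : ∀ c, p * c * q = 0) : p = 0 ∨ q = 0 := by
  by_contra! hpq
  obtain ⟨hp, hq⟩ := hpq
  obtain ⟨i, j, hij⟩ : ∃ i j, p i j ≠ 0 := by
    by_contra! h0
    exact hp (Matrix.ext h0)
  obtain ⟨k, l, hkl⟩ : ∃ k l, q k l ≠ 0 := by
    by_contra! h0
    exact hq (Matrix.ext h0)
  have h1 := congrFun (congrFun (h (Matrix.single j k 1)) i) l
  rw [Matrix.mul_assoc, Matrix.mul_apply, Finset.sum_eq_single j] at h1
  · simp at h1
    exact h1.elim hij hkl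
  · intro b _ hb
    simp [Matrix.single_mul_apply_of_ne _ _ _ _ _ hb]
  · simp

variable (br : Matrix (Fin n) (Fin n) ℂ →ₗ[ℂ]
    Matrix (Fin n) (Fin n) ℂ →ₗ[ℂ] Matrix (Fin n) (Fin n) ℂ)

/-- An alternating bracket on matrices that is infinitesimally orthogonal to the power traces
`tr X²` and `tr X³` is a biderivation, hence satisfies Brešar's identity. -/
theorem Matrix.commutator_mul_bracket (halt : ∀ X, br X X = 0)
    (hsq : ∀ X U, (X * br X U).trace = 0) (hcube : ∀ X U, (X * X * br X U).trace = 0)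
    (X Y Z U V : Matrix (Fin n) (Fin n) ℂ) :
    (X * Y - Y * X) * Z * br U V = br X Y * Z * (U * V - V * U) := by
  have hinv : ∀ X Z U, (X * br Z U).trace = - (Z * br X U).trace := by
    intro X Z U
    have h := hsq (X + Z) U
    simp only [map_add, LinearMap.add_apply, mul_add, add_mul, Matrix.trace_add, hsq] at h
    linear_combination h
  have hlin : ∀ X Z U, (X * X * br Z U).trace = - ((X * Z + Z * X) * br X U).trace := by
    intro X Z U
    have h1 := hcube (X + Z) U
    have h2 := hcube (X - Z) U
    simp only [map_add, map_sub, LinearMap.add_apply, LinearMap.sub_apply, mul_add, add_mul,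
      mul_sub, sub_mul, Matrix.trace_add, Matrix.trace_sub, hcube] at h1 h2
    simp only [add_mul, Matrix.trace_add]
    linear_combination (h1 - h2) / 2
  have hJ : ∀ U X, br (X * X) U = br X U * X + X * br X U := by
    intro U X
    rw [Matrix.ext_iff_trace_mul_left]
    intro Z
    rw [hinv, hlin, neg_neg, add_mul, mul_add, Matrix.trace_add, Matrix.trace_add,
      Matrix.mul_assoc X, Matrix.trace_mul_comm X, Matrix.mul_assoc, Matrix.mul_assoc]
  have hl : ∀ X Y U, br (X * Y) U = br X U * Y + X * br Y U := by
    intro X Y U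
    exact jordan_derivation_map_mul
      (fun x hx => by
        have : (2 : ℂ) • x = 0 := by rw [two_smul, hx]
        exact (smul_eq_zero.1 this).resolve_left two_ne_zero)
      (fun p q => Matrix.eq_zero_or_eq_zero_of_forall_mul_mul_eq_zero)
      (br.flip U).toAddMonoidHom (hJ U) X Y
  have hswap : ∀ X Y, br X Y = - br Y X := by
    intro X Y
    have h := halt (X + Y)
    simp only [map_add, LinearMap.add_apply, halt] at h
    rw [eq_neg_iff_add_eq_zero]
    simpa [add_comm] using h
  have hr : ∀ X Y U, br U (X * Y) = br U X * Y + X * br U Y := by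
    intro X Y U
    rw [hswap, hl, hswap X U, hswap Y U, neg_mul, mul_neg, neg_add, neg_neg, neg_neg]
  exact commutator_mul_biderivation (fun X Y => br X Y) hl hr X Y Z U V

theorem Matrix.bracket_eq_zero_of_commute (halt : ∀ X, br X X = 0)
    (hsq : ∀ X U, (X * br X U).trace = 0) (hcube : ∀ X U, (X * X * br X U).trace = 0)
    {X Y : Matrix (Fin n) (Fin n) ℂ} (h : X * Y = Y * X) : br X Y = 0 := by
  by_cases hc : ∀ U V : Matrix (Fin n) (Fin n) ℂ, U * V - V * U = 0
  · have hs : ∀ U : Matrix (Fin n) (Fin n) ℂ, ∃ c : ℂ, U = c • 1 := by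
      intro U
      have hU : U ∈ Set.center (Matrix (Fin n) (Fin n) ℂ) :=
        Semigroup.mem_center_iff.2 fun V => sub_eq_zero.1 (hc V U)
      rw [Matrix.center_eq_scalar_image] at hU
      obtain ⟨c, -, rfl⟩ := hU
      exact ⟨c, by rw [Matrix.scalar_apply, Matrix.smul_one_eq_diagonal]⟩
    obtain ⟨c, rfl⟩ := hs X
    obtain ⟨d, rfl⟩ := hs Y
    simp [halt]
  · push Not at hc
    obtain ⟨U, V, hUV⟩ := hc
    refine (Matrix.eq_zero_or_eq_zero_of_forall_mul_mul_eq_zero fun Z => ?_).resolve_right hUV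
    rw [← Matrix.commutator_mul_bracket br halt hsq hcube, sub_eq_zero.2 h, zero_mul, zero_mul]

theorem Matrix.commute_of_bracket_eq_zero (halt : ∀ X, br X X = 0)
    (hsq : ∀ X U, (X * br X U).trace = 0) (hcube : ∀ X U, (X * X * br X U).trace = 0)
    (hbr : br ≠ 0) {X Y : Matrix (Fin n) (Fin n) ℂ} (h : br X Y = 0) : X * Y = Y * X := by
  obtain ⟨U, V, hUV⟩ : ∃ U V, br U V ≠ 0 := by
    by_contra! h0
    exact hbr (LinearMap.ext₂ h0)
  rw [← sub_eq_zero]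
  refine (Matrix.eq_zero_or_eq_zero_of_forall_mul_mul_eq_zero fun Z => ?_).resolve_right hUV
  rw [Matrix.commutator_mul_bracket br halt hsq hcube, h, zero_mul, zero_mul]

end MatrixBracket

section Spectrum

theorem isUnit_one_sub_of_spectralRadius_lt_one {A : Type*} [NormedRing A] [NormedAlgebra ℂ A]
    {a : A} (h : spectralRadius ℂ a < 1) :
    IsUnit (1 - a) := by
  have := spectrum.mem_resolventSet_of_spectralRadius_lt (k := (1 : ℂ)) (a := a) (by simpa using h)
  simpa [spectrum.mem_resolventSet_iff] using this

variable {A : Type*} [NormedRing A] [NormedAlgebra ℂ A] [CompleteSpace A]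

theorem spectralRadius_ne_top (a : A) : spectralRadius ℂ a ≠ ⊤ := by
  refine ne_top_of_le_ne_top (b := ((‖a‖₊ * ‖(1 : A)‖₊ : NNReal) : ENNReal)) ENNReal.coe_ne_top ?_
  refine iSup₂_le fun k hk => ?_
  exact_mod_cast spectrum.norm_le_norm_mul_of_mem hk

theorem norm_le_toReal_spectralRadius {a : A} {μ : ℂ} (hμ : μ ∈ spectrum ℂ a) :
    ‖μ‖ ≤ (spectralRadius ℂ a).toReal := by
  have h : (‖μ‖₊ : ENNReal) ≤ spectralRadius ℂ a := le_iSup₂ (f := fun k _ => (‖k‖₊ : ENNReal)) μ hμ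
  simpa using ENNReal.toReal_mono (spectralRadius_ne_top a) h

theorem toReal_spectralRadius_le (a : A) :
    (spectralRadius ℂ a).toReal ≤ ‖a‖ * ‖(1 : A)‖ := by
  refine ENNReal.toReal_le_of_le_ofReal (by positivity) (iSup₂_le fun k hk => ?_)
  rw [← enorm_eq_nnnorm, ← ofReal_norm]
  exact ENNReal.ofReal_le_ofReal (spectrum.norm_le_norm_mul_of_mem hk)

theorem spectralRadius_mul_le_of_commute {a b : A} (h : Commute a b) :
    spectralRadius ℂ (a * b) ≤ spectralRadius ℂ a * ‖b‖₊ := by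
  refine le_of_tendsto_of_tendsto
    (spectrum.pow_nnnorm_pow_one_div_tendsto_nhds_spectralRadius (a * b))
    (ENNReal.Tendsto.mul_const
      (spectrum.pow_nnnorm_pow_one_div_tendsto_nhds_spectralRadius a)
      (Or.inr ENNReal.coe_ne_top)) ?_
  filter_upwards [Filter.eventually_gt_atTop 0] with n hn
  have hn' : (n : ℝ) ≠ 0 := by positivity
  have h1 : ((‖b‖₊ : ENNReal) ^ (n : ℝ)) ^ (1 / n : ℝ) = ‖b‖₊ := by
    rw [← ENNReal.rpow_mul, mul_one_div_cancel hn', ENNReal.rpow_one]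
  rw [← h1]
  rw [← ENNReal.mul_rpow_of_nonneg _ _ (by positivity)]
  refine ENNReal.rpow_le_rpow ?_ (by positivity)
  rw [ENNReal.rpow_natCast, h.mul_pow]
  have h2 : ‖a ^ n * b ^ n‖₊ ≤ ‖a ^ n‖₊ * ‖b‖₊ ^ n :=
    (nnnorm_mul_le _ _).trans (mul_le_mul_right (nnnorm_pow_le' b hn) _)
  exact_mod_cast h2

/-- The spectra of `w + y` stay bounded when `y` commutes with `w` and has bounded spectral
radius. -/
theorem exists_spectralRadius_add_le (w : A) (r : NNReal) :
    ∃ C : NNReal, ∀ y : A, Commute y w → spectralRadius ℂ y ≤ r →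
      spectralRadius ℂ (y + w) ≤ C := by
  have h1 := (spectrum.resolvent_tendsto_cobounded (𝕜 := ℂ) w).norm
  rw [norm_zero] at h1
  have h2 := h1.eventually (gt_mem_nhds (show (0 : ℝ) < 1 / (r + 1) by positivity))
  have h3 : ∀ᶠ μ : ℂ in Bornology.cobounded ℂ, μ ∈ resolventSet ℂ w := by
    filter_upwards [spectrum.eventually_isUnit_resolvent (𝕜 := ℂ) w] with μ hμ
    exact spectrum.isUnit_resolvent.2 hμ
  obtain ⟨C, -, hC⟩ := (Filter.hasBasis_cobounded_norm (E := ℂ)).eventually_iff.1 (h2.and h3)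
  refine ⟨C.toNNReal, fun y hy hr => iSup₂_le fun μ hμ => ?_⟩
  by_contra! hlt
  have hμC : C ≤ ‖μ‖ := by
    exact (Real.le_coe_toNNReal C).trans (NNReal.coe_le_coe.2 (ENNReal.coe_lt_coe.1 hlt).le)
  obtain ⟨hres, hu⟩ := hC hμC
  refine hμ ?_
  obtain ⟨v, hv⟩ := hu
  have hv' : resolvent w μ = ((v⁻¹ : Aˣ) : A) := by
    rw [resolvent, ← hv, Ring.inverse_unit]
  have hcomm : Commute y ((v⁻¹ : Aˣ) : A) := by
    apply Commute.units_inv_right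
    rw [hv]
    exact (Algebra.commute_algebraMap_right μ y).sub_right hy
  have hlt1 : spectralRadius ℂ (y * ((v⁻¹ : Aˣ) : A)) < 1 := by
    refine (spectralRadius_mul_le_of_commute hcomm).trans_lt ?_
    rw [hv'] at hres
    have : r * ‖((v⁻¹ : Aˣ) : A)‖₊ < 1 := by
      rw [← NNReal.coe_lt_coe]
      push_cast
      calc (r : ℝ) * ‖((v⁻¹ : Aˣ) : A)‖ ≤ r * (1 / (r + 1)) := by gcongr
        _ < 1 := by rw [mul_one_div, div_lt_one (by positivity)]; linarith
    calc _ ≤ (r : ENNReal) * ‖((v⁻¹ : Aˣ) : A)‖₊ := by gcongr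
      _ < 1 := by exact_mod_cast this
  have h4 := (isUnit_one_sub_of_spectralRadius_lt_one hlt1).mul v.isUnit
  rw [sub_mul, mul_assoc, Units.inv_mul, mul_one, one_mul, hv] at h4
  rwa [spectrum.mem_resolventSet_iff, add_comm, ← sub_sub]

end Spectrum

section ConjugationCurve

open scoped Matrix.Norms.Operator

variable {n : ℕ} {A : Type*} [NormedRing A] [NormedAlgebra ℂ A] [CompleteSpace A]

theorem norm_trace_pow_le (π : A →ₐ[ℂ] Matrix (Fin n) (Fin n) ℂ) (b : A) {k : ℕ} (hk : 0 < k) :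
    ‖((π b) ^ k).trace‖ ≤ n * (spectralRadius ℂ b).toReal ^ k := by
  have hroot : ∀ μ ∈ ((π b) ^ k).charpoly.roots, ‖μ‖ ≤ (spectralRadius ℂ b).toReal ^ k := by
    intro μ hμ
    have h1 : μ ∈ spectrum ℂ ((π b) ^ k) :=
      Matrix.mem_spectrum_iff_isRoot_charpoly.2 (Polynomial.isRoot_of_mem_roots hμ)
    rw [← map_pow] at h1
    have h2 := AlgHom.spectrum_apply_subset π (b ^ k) h1
    rw [spectrum.map_pow_of_pos b hk] at h2
    obtain ⟨ν, hν, rfl⟩ := h2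
    rw [norm_pow]
    exact pow_le_pow_left₀ (norm_nonneg _) (norm_le_toReal_spectralRadius hν) k
  rw [Matrix.trace_eq_sum_roots_charpoly]
  calc ‖((π b) ^ k).charpoly.roots.sum‖
      ≤ (((π b) ^ k).charpoly.roots.map fun μ => ‖μ‖).sum := by
        simpa using Multiset.le_sum_of_subadditive (norm : ℂ → ℝ) norm_zero.le norm_add_le
          ((π b) ^ k).charpoly.roots
    _ ≤ Multiset.card (((π b) ^ k).charpoly.roots.map fun μ => ‖μ‖) •
          (spectralRadius ℂ b).toReal ^ k := by
        refine Multiset.sum_le_card_nsmul _ _ fun x hx => ?_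
        obtain ⟨μ, hμ, rfl⟩ := Multiset.mem_map.1 hx
        exact hroot μ hμ
    _ ≤ n * (spectralRadius ℂ b).toReal ^ k := by
        rw [nsmul_eq_mul, Multiset.card_map]
        gcongr
        simpa using Polynomial.card_roots' ((π b) ^ k).charpoly

/-- A linear map onto a matrix algebra is continuous as soon as its trace form is bounded. -/
theorem continuous_of_norm_trace_sq_le {A : Type*} [NormedRing A] [NormedAlgebra ℂ A]
    {f : A →ₗ[ℂ] Matrix (Fin n) (Fin n) ℂ}
    (hf : Function.Surjective f) {C : ℝ} (hC : ∀ x, ‖(f x * f x).trace‖ ≤ C * ‖x‖ ^ 2) :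
    Continuous f := by
  refine continuous_matrix fun i j => ?_
  obtain ⟨y, hy⟩ := hf (Matrix.single j i 1)
  let g : A →ₗ[ℂ] ℂ := Matrix.traceLinearMap (Fin n) ℂ ℂ ∘ₗ LinearMap.mulRight ℂ (f y) ∘ₗ f
  have hg : ∀ x, g x = (f x * f y).trace := fun x => rfl
  have hgij : ∀ x, f x i j = g x := by
    intro x
    rw [hg, hy, Matrix.trace_mul_single]
    simp
  simp only [hgij]
  have hball : ∀ x ∈ Metric.closedBall (0 : A) 1, ‖g x‖ ≤ |C| * (1 + ‖y‖) ^ 2 := by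
    intro x hx
    rw [mem_closedBall_zero_iff] at hx
    have hpol : g x = ((f (x + y) * f (x + y)).trace - (f (x - y) * f (x - y)).trace) / 4 := by
      rw [hg]
      simp only [map_add, map_sub, add_mul, mul_add, sub_mul, mul_sub, Matrix.trace_add,
        Matrix.trace_sub, Matrix.trace_mul_comm (f y) (f x)]
      ring
    have hb : ∀ z : A, ‖z‖ ≤ 1 + ‖y‖ → ‖(f z * f z).trace‖ ≤ |C| * (1 + ‖y‖) ^ 2 := by
      intro z hz
      refine (hC z).trans ?_
      gcongr
      exact le_abs_self C
    have h1 := hb (x + y) ((norm_add_le x y).trans (by gcongr))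
    have h2 := hb (x - y) ((norm_sub_le x y).trans (by gcongr))
    rw [hpol, norm_div]
    have h3 := norm_sub_le (f (x + y) * f (x + y)).trace (f (x - y) * f (x - y)).trace
    have h4 : ‖(4 : ℂ)‖ = 4 := by norm_num
    rw [h4, div_le_iff₀ (by norm_num)]
    have h5 : 0 ≤ |C| * (1 + ‖y‖) ^ 2 := by positivity
    linarith
  exact AddMonoidHomClass.continuous_of_bound g _
    (LinearMap.bound_of_ball_bound' one_pos _ g hball)

/-- The conjugation curve `t ↦ exp(-tu) x exp(tu)`. -/
noncomputable def conjCurve (u x : A) (t : ℂ) : A :=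
  NormedSpace.exp (t • -u) * x * NormedSpace.exp (t • u)

theorem hasDerivAt_conjCurve (u x : A) (t : ℂ) :
    HasDerivAt (conjCurve u x)
      (NormedSpace.exp (t • -u) * -u * x * NormedSpace.exp (t • u) +
        NormedSpace.exp (t • -u) * x * (NormedSpace.exp (t • u) * u)) t :=
  ((hasDerivAt_exp_smul_const (-u) t).mul_const x).mul (hasDerivAt_exp_smul_const u t)

theorem hasDerivAt_conjCurve_zero (u x : A) :
    HasDerivAt (conjCurve u x) (x * u - u * x) 0 := by
  convert hasDerivAt_conjCurve u x 0 using 1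
  simp [sub_eq_add_neg, add_comm]

theorem conjCurve_zero {A : Type*} [NormedRing A] [NormedAlgebra ℂ A] (u x : A) : conjCurve u x 0 = x := by
  simp [conjCurve]

theorem spectralRadius_conjCurve (u x : A) (t : ℂ) :
    spectralRadius ℂ (conjCurve u x t) = spectralRadius ℂ x := by
  let _ : NormedAlgebra ℚ A := NormedAlgebra.restrictScalars ℚ ℂ A
  let _ := NormedSpace.invertibleExp (t • u)
  have h : conjCurve u x t = ((unitOfInvertible (NormedSpace.exp (t • u)))⁻¹ : Aˣ) * x *
      (unitOfInvertible (NormedSpace.exp (t • u)) : Aˣ) := by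
    rw [val_inv_unitOfInvertible, NormedSpace.invOf_exp, val_unitOfInvertible, conjCurve, smul_neg]
  rw [spectralRadius, h, spectrum.units_conjugate', spectralRadius]

theorem trace_mul_deriv_eq_zero {g : ℂ → Matrix (Fin n) (Fin n) ℂ}
    {g' : Matrix (Fin n) (Fin n) ℂ} (hg : Differentiable ℂ g) (hg' : HasDerivAt g g' 0) {C : ℝ}
    (hC : ∀ t, ‖(g t * g t).trace‖ ≤ C) : (g 0 * g').trace = 0 := by
  let τ : Matrix (Fin n) (Fin n) ℂ →L[ℂ] ℂ :=
    LinearMap.toContinuousLinearMap (Matrix.traceLinearMap (Fin n) ℂ ℂ)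
  have hd : Differentiable ℂ fun t => τ (g t * g t) := τ.differentiable.comp (hg.mul hg)
  have hb : Bornology.IsBounded (Set.range fun t => τ (g t * g t)) :=
    isBounded_iff_forall_norm_le.2 ⟨C, by rintro _ ⟨t, rfl⟩; exact hC t⟩
  obtain ⟨c, hc⟩ := hd.exists_eq_const_of_bounded hb
  have h1 : HasDerivAt (fun t => τ (g t * g t)) (τ (g' * g 0 + g 0 * g')) 0 :=
    τ.hasFDerivAt.comp_hasDerivAt 0 (hg'.mul hg')
  rw [hc] at h1
  have h2 : (g' * g 0 + g 0 * g').trace = 0 := h1.unique (hasDerivAt_const 0 c)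
  rw [Matrix.trace_add, Matrix.trace_mul_comm g' (g 0)] at h2
  linear_combination h2 / 2

theorem trace_mul_mul_deriv_eq_zero {g : ℂ → Matrix (Fin n) (Fin n) ℂ}
    {g' : Matrix (Fin n) (Fin n) ℂ} (hg : Differentiable ℂ g) (hg' : HasDerivAt g g' 0) {C : ℝ}
    (hC : ∀ t, ‖(g t * g t * g t).trace‖ ≤ C) : (g 0 * g 0 * g').trace = 0 := by
  let τ : Matrix (Fin n) (Fin n) ℂ →L[ℂ] ℂ :=
    LinearMap.toContinuousLinearMap (Matrix.traceLinearMap (Fin n) ℂ ℂ)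
  have hd : Differentiable ℂ fun t => τ (g t * g t * g t) :=
    τ.differentiable.comp ((hg.mul hg).mul hg)
  have hb : Bornology.IsBounded (Set.range fun t => τ (g t * g t * g t)) :=
    isBounded_iff_forall_norm_le.2 ⟨C, by rintro _ ⟨t, rfl⟩; exact hC t⟩
  obtain ⟨c, hc⟩ := hd.exists_eq_const_of_bounded hb
  have h1 : HasDerivAt (fun t => τ (g t * g t * g t))
      (τ ((g' * g 0 + g 0 * g') * g 0 + g 0 * g 0 * g')) 0 :=
    τ.hasFDerivAt.comp_hasDerivAt 0 ((hg'.mul hg').mul hg')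
  rw [hc] at h1
  have h2 : ((g' * g 0 + g 0 * g') * g 0 + g 0 * g 0 * g').trace = 0 :=
    h1.unique (hasDerivAt_const 0 c)
  rw [add_mul, Matrix.trace_add, Matrix.trace_add, Matrix.mul_assoc g', Matrix.trace_mul_comm g',
    Matrix.mul_assoc (g 0) g', Matrix.trace_mul_comm (g 0) (g' * g 0), Matrix.mul_assoc g',
    Matrix.trace_mul_comm g'] at h2
  linear_combination h2 / 3

end ConjugationCurve

section SpectralIsometry

open scoped Matrix.Norms.Operator

variable {A B : Type*} [NormedRing A] [NormedAlgebra ℂ A] [CompleteSpace A]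
  [NormedRing B] [NormedAlgebra ℂ B] [CompleteSpace B]

theorem isUnit_one_add_of_spectralRadius_lt_one {A : Type*} [NormedRing A] [NormedAlgebra ℂ A]
    {a : A} (h : spectralRadius ℂ a < 1) :
    IsUnit (1 + a) := by
  have h1 := spectrum.mem_resolventSet_of_spectralRadius_lt (k := (-1 : ℂ)) (by simpa using h)
  simpa [spectrum.mem_resolventSet_iff, add_comm] using h1.neg

theorem spectralRadius_eq_zero_of_forall_isUnit {A : Type*} [NormedRing A] [NormedAlgebra ℂ A]
    {a : A} (h : ∀ c : ℂ, IsUnit (1 + c • a)) :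
    spectralRadius ℂ a = 0 := by
  refine le_antisymm (iSup₂_le fun k hk => ?_) zero_le
  by_contra! hk0
  have hk1 : k ≠ 0 := by
    rintro rfl
    simp at hk0
  refine hk ?_
  have h1 := (h (-k⁻¹)).smul (Units.mk0 k hk1)
  rw [spectrum.mem_resolventSet_iff]
  convert h1 using 1
  rw [Units.smul_mk0, smul_add, smul_smul, Algebra.algebraMap_eq_smul_one]
  simp [hk1, sub_eq_add_neg]

/-- A spectral isometry defined on a semisimple Banach algebra is injective. -/
theorem injective_of_spectralRadius_eq {B : Type*} [NormedRing B] [NormedAlgebra ℂ B]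
    (hA : (⊥ : Ideal A).jacobson = ⊥) (T : A →ₗ[ℂ] B)
    (hρ : ∀ a : A, spectralRadius ℂ (T a) = spectralRadius ℂ a) : Function.Injective T := by
  rw [injective_iff_map_eq_zero]
  intro x hx
  have hinv : ∀ (w : A) (c : ℂ), spectralRadius ℂ (w + c • x) = spectralRadius ℂ w := by
    intro w c
    rw [← hρ, ← hρ w, map_add, map_smul, hx, smul_zero, add_zero]
  have hquasi : ∀ z : A, spectralRadius ℂ (z * x) = 0 := by
    intro z
    have h1 : Filter.Tendsto (fun c : ℂ => ‖Ring.inverse (1 + c • z) - 1‖ * ‖(1 : A)‖)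
        (nhdsWithin 0 {0}ᶜ) (nhds 0) := by
      have h2 : ContinuousAt (fun c : ℂ => ‖Ring.inverse (1 + c • z) - 1‖ * ‖(1 : A)‖) 0 := by
        have h3 : ContinuousAt (fun c : ℂ => Ring.inverse (1 + c • z)) 0 := by
          refine ContinuousAt.comp (g := Ring.inverse) ?_ (by fun_prop)
          simpa using NormedRing.inverse_continuousAt (1 : Aˣ)
        fun_prop
      have := h2.tendsto.mono_left (nhdsWithin_le_nhds (s := {0}ᶜ))
      simpa using this
    have h4 : ∀ᶠ c : ℂ in nhdsWithin 0 {0}ᶜ, IsUnit (1 + c • z) := by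
      have : ContinuousAt (fun c : ℂ => 1 + c • z) 0 := by fun_prop
      exact (this.eventually (Units.isOpen.mem_nhds (by simp))).filter_mono nhdsWithin_le_nhds
    obtain ⟨c, ⟨hc1, hc2⟩, hc0⟩ := ((h1.eventually (gt_mem_nhds one_pos)).and h4 |>.and
      self_mem_nhdsWithin).exists
    obtain ⟨g, hg⟩ := hc2
    rw [← hg, Ring.inverse_unit] at hc1
    have h5 : spectralRadius ℂ ((g⁻¹ : Aˣ) - 1 : A) < 1 := by
      rw [← ENNReal.toReal_lt_toReal (spectralRadius_ne_top _) ENNReal.one_ne_top]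
      exact (toReal_spectralRadius_le _).trans_lt hc1
    have h6 : spectralRadius ℂ ((g : A) * x) = 0 := by
      refine spectralRadius_eq_zero_of_forall_isUnit fun d => ?_
      have h7 : IsUnit ((g⁻¹ : Aˣ) + d • x : A) := by
        have := isUnit_one_add_of_spectralRadius_lt_one ((hinv _ d).trans_lt h5)
        convert this using 1
        abel
      have h8 := g.isUnit.mul h7
      simpa [mul_add] using h8
    have h9 : c • (z * x) = (g : A) * x + (-1 : ℂ) • x := by
      rw [hg]
      simp [add_mul]
    have h10 : spectralRadius ℂ (c • (z * x)) = 0 := by rw [h9, hinv, h6]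
    have h11 : z * x = c • (z * x) * (c⁻¹ • (1 : A)) := by
      rw [mul_smul_comm, mul_one, smul_smul, inv_mul_cancel₀ hc0, one_smul]
    have h12 := spectralRadius_mul_le_of_commute
      (((Commute.one_right (c • (z * x))).smul_right c⁻¹))
    rw [← h11, h10, zero_mul] at h12
    exact le_antisymm h12 zero_le
  have hmem : x ∈ (⊥ : Ideal A).jacobson := by
    rw [Ideal.mem_jacobson_iff]
    intro y
    obtain ⟨v, hv⟩ := isUnit_one_add_of_spectralRadius_lt_one
      (a := y * x) (by rw [hquasi]; exact one_pos)
    refine ⟨(v⁻¹ : Aˣ), ?_⟩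
    have := v.inv_mul
    rw [hv, mul_add, mul_one] at this
    rw [Ideal.mem_bot, mul_assoc, sub_eq_zero, add_comm, this]
  rw [hA] at hmem
  exact hmem

section Bracket

variable {n : ℕ} (π : B →ₐ[ℂ] Matrix (Fin n) (Fin n) ℂ) (T : A →ₗ[ℂ] B)

theorem continuous_comp_of_spectralRadius_eq (hπ : Function.Surjective π)
    (hT : Function.Surjective T) (hρ : ∀ a : A, spectralRadius ℂ (T a) = spectralRadius ℂ a) :
    Continuous (π.toLinearMap ∘ₗ T) := by
  refine continuous_of_norm_trace_sq_le (C := n * ‖(1 : A)‖ ^ 2) (hπ.comp hT) fun x => ?_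
  have h := norm_trace_pow_le π (T x) two_pos
  rw [hρ, pow_two (π (T x))] at h
  refine h.trans ?_
  rw [mul_assoc, ← mul_pow, mul_comm ‖(1 : A)‖]
  gcongr
  exact toReal_spectralRadius_le x

/-- Along a conjugation curve the spectral radius is constant, so by Liouville the power traces
of its image under `π ∘ T` are constant as well. -/
theorem trace_identities_of_spectralRadius_eq (hπ : Function.Surjective π)
    (hT : Function.Surjective T) (hρ : ∀ a : A, spectralRadius ℂ (T a) = spectralRadius ℂ a)
    (x u : A) :
    (π (T x) * π (T (x * u - u * x))).trace = 0 ∧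
      (π (T x) * π (T x) * π (T (x * u - u * x))).trace = 0 := by
  let φ : A →L[ℂ] Matrix (Fin n) (Fin n) ℂ :=
    ⟨π.toLinearMap ∘ₗ T, continuous_comp_of_spectralRadius_eq π T hπ hT hρ⟩
  have hφ : ∀ y, φ y = π (T y) := fun y => rfl
  have hd : Differentiable ℂ fun t => φ (conjCurve u x t) :=
    φ.differentiable.comp fun t => (hasDerivAt_conjCurve u x t).differentiableAt
  have hd0 : HasDerivAt (fun t => φ (conjCurve u x t)) (φ (x * u - u * x)) 0 :=
    φ.hasFDerivAt.comp_hasDerivAt 0 (hasDerivAt_conjCurve_zero u x)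
  have hb : ∀ t k, 0 < k →
      ‖(φ (conjCurve u x t) ^ k).trace‖ ≤ n * (spectralRadius ℂ x).toReal ^ k := by
    intro t k hk
    have h := norm_trace_pow_le π (T (conjCurve u x t)) hk
    rwa [hρ, spectralRadius_conjCurve] at h
  have h2 := trace_mul_deriv_eq_zero hd hd0 fun t => by
    rw [← pow_two]
    exact hb t 2 two_pos
  have h3 := trace_mul_mul_deriv_eq_zero hd hd0 fun t => by
    rw [← pow_two, ← pow_succ]
    exact hb t 3 three_pos
  simp only [conjCurve_zero, hφ] at h2 h3
  exact ⟨h2, h3⟩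

/-- The commutator of `A` descends to a bracket on the matrix algebra. -/
theorem exists_bracket_of_spectralRadius_eq (hπ : Function.Surjective π)
    (hT : Function.Surjective T) (hρ : ∀ a : A, spectralRadius ℂ (T a) = spectralRadius ℂ a) :
    ∃ br : Matrix (Fin n) (Fin n) ℂ →ₗ[ℂ] Matrix (Fin n) (Fin n) ℂ →ₗ[ℂ]
        Matrix (Fin n) (Fin n) ℂ,
      (∀ x y, br (π (T x)) (π (T y)) = π (T (x * y - y * x))) ∧ (∀ X, br X X = 0) ∧
      (∀ X U, (X * br X U).trace = 0) ∧ ∀ X U, (X * X * br X U).trace = 0 := by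
  have hsurj : Function.Surjective (π.toLinearMap ∘ₗ T) := hπ.comp hT
  have htr := fun x u => (trace_identities_of_spectralRadius_eq π T hπ hT hρ x u).1
  have hker : ∀ y u, π (T y) = 0 → π (T (y * u - u * y)) = 0 := by
    intro y u hy
    rw [Matrix.ext_iff_trace_mul_left]
    intro Z
    obtain ⟨x, rfl⟩ := hsurj Z
    have h := htr (x + y) u
    have h1 : (x + y) * u - u * (x + y) = (x * u - u * x) + (y * u - u * y) := by noncomm_ring
    rw [h1, map_add, map_add, hy, add_zero, map_add, map_add, mul_add, Matrix.trace_add, htr,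
      zero_add] at h
    simpa using h
  obtain ⟨σ, hσ⟩ := LinearMap.exists_rightInverse_of_surjective _
    (LinearMap.range_eq_top.2 hsurj)
  have hσ' : ∀ X, π (T (σ X)) = X := fun X => LinearMap.congr_fun hσ X
  let br : Matrix (Fin n) (Fin n) ℂ →ₗ[ℂ] Matrix (Fin n) (Fin n) ℂ →ₗ[ℂ]
      Matrix (Fin n) (Fin n) ℂ :=
    ((LinearMap.mul ℂ A - (LinearMap.mul ℂ A).flip).compl₁₂ σ σ).compr₂ (π.toLinearMap ∘ₗ T)
  have hbr : ∀ X Y, br X Y = π (T (σ X * σ Y - σ Y * σ X)) := fun X Y => rfl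
  have hφ : ∀ x y, br (π (T x)) (π (T y)) = π (T (x * y - y * x)) := by
    intro x y
    have h1 := hker (σ (π (T x)) - x) (σ (π (T y))) (by rw [map_sub, map_sub, hσ', sub_self])
    have h2 := hker (σ (π (T y)) - y) x (by rw [map_sub, map_sub, hσ', sub_self])
    rw [hbr, ← sub_eq_zero, ← map_sub, ← map_sub]
    rw [← sub_zero (0 : Matrix (Fin n) (Fin n) ℂ)]
    nth_rewrite 1 [← h1]
    rw [← h2, ← map_sub, ← map_sub]
    congr 2
    noncomm_ring
  refine ⟨br, hφ, fun X => by simp [hbr], fun X U => ?_, fun X U => ?_⟩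
  · rw [hbr]
    nth_rewrite 1 [← hσ' X]
    exact htr _ _
  · rw [hbr]
    have h := (trace_identities_of_spectralRadius_eq π T hπ hT hρ (σ X) (σ U)).2
    rwa [hσ'] at h

/-- If the elements of `A` that `T` maps into the ideal `I` are central, then `π` maps `I` into
the centre of the matrix algebra. -/
theorem commute_of_forall_commute_preimage (hπ : Function.Surjective π) (hπc : Continuous π)
    (hT : Function.Surjective T) (hρ : ∀ a : A, spectralRadius ℂ (T a) = spectralRadius ℂ a)
    {I : TwoSidedIdeal B} (hI : ∀ s, T s ∈ I → ∀ w, Commute s w) {y : B} (hy : y ∈ I)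
    (X : Matrix (Fin n) (Fin n) ℂ) : Commute (π y) X := by
  obtain ⟨b, rfl⟩ := hπ X
  let ψ : B →L[ℂ] Matrix (Fin n) (Fin n) ℂ := ⟨π.toLinearMap, hπc⟩
  have hψ : ∀ z, ψ z = π z := fun z => rfl
  have key : ∀ w, (π (y + T w) * π (y * b - b * y)).trace = 0 := by
    intro w
    have hd : Differentiable ℂ fun t => ψ (conjCurve b y t + T w) :=
      ψ.differentiable.comp fun t =>
        ((hasDerivAt_conjCurve b y t).add_const (T w)).differentiableAt
    have hd0 : HasDerivAt (fun t => ψ (conjCurve b y t + T w)) (ψ (y * b - b * y)) 0 :=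
      ψ.hasFDerivAt.comp_hasDerivAt 0 ((hasDerivAt_conjCurve_zero b y).add_const (T w))
    obtain ⟨C, hC⟩ := exists_spectralRadius_add_le w (spectralRadius ℂ y).toNNReal
    have hb : ∀ t, ‖(ψ (conjCurve b y t + T w) * ψ (conjCurve b y t + T w)).trace‖ ≤
        n * (C : ℝ) ^ 2 := by
      intro t
      obtain ⟨s, hs⟩ := hT (conjCurve b y t)
      have hsI : T s ∈ I := by
        rw [hs]
        exact I.mul_mem_right _ _ (I.mul_mem_left _ _ hy)
      have hsr : spectralRadius ℂ s ≤ (spectralRadius ℂ y).toNNReal := by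
        rw [← hρ, hs, spectralRadius_conjCurve, ENNReal.coe_toNNReal (spectralRadius_ne_top y)]
      have h := norm_trace_pow_le π (T (s + w)) two_pos
      rw [hρ] at h
      rw [hψ, ← hs, ← map_add, ← pow_two]
      refine h.trans ?_
      gcongr
      exact ENNReal.toReal_mono ENNReal.coe_ne_top (hC s (hI s hsI w) hsr)
    have h := trace_mul_deriv_eq_zero hd hd0 hb
    rwa [conjCurve_zero] at h
  have h0 := key 0
  rw [map_zero, add_zero] at h0
  rw [commute_iff_eq, ← sub_eq_zero, ← map_mul, ← map_mul, ← map_sub,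
    Matrix.ext_iff_trace_mul_left]
  intro Z
  obtain ⟨w, rfl⟩ := hπ.comp hT Z
  have h := key w
  rw [map_add, add_mul, Matrix.trace_add, h0, zero_add] at h
  simpa using h

/-- If `π` maps a two-sided ideal that it does not annihilate into the centre, then the matrix
algebra is commutative. -/
theorem commute_of_ideal_map_central {B : Type*} [Ring B] [Algebra ℂ B]
    (π : B →ₐ[ℂ] Matrix (Fin n) (Fin n) ℂ) (hπ : Function.Surjective π) {I : TwoSidedIdeal B}
    (hI : ∀ y ∈ I, ∀ X, Commute (π y) X) {y : B} (hy : y ∈ I) (hy0 : π y ≠ 0)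
    (U V : Matrix (Fin n) (Fin n) ℂ) : Commute U V := by
  rw [commute_iff_eq, ← sub_eq_zero]
  refine (Matrix.eq_zero_or_eq_zero_of_forall_mul_mul_eq_zero fun Z => ?_).resolve_left hy0
  obtain ⟨z, rfl⟩ := hπ Z
  obtain ⟨u, rfl⟩ := hπ U
  have h1 := hI _ (I.mul_mem_right _ z hy) V
  have h2 := hI _ (I.mul_mem_right _ u (I.mul_mem_right _ z hy)) V
  rw [commute_iff_eq, map_mul] at h1
  rw [commute_iff_eq, map_mul, map_mul] at h2
  rw [mul_sub, sub_eq_zero, ← mul_assoc, ← mul_assoc, h2, h1, mul_assoc V]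

end Bracket

/-- A surjective spectral isometry from a semisimple Banach algebra onto a Banach algebra with a
separating family of finite-dimensional irreducible representations preserves commutativity in
both directions. -/
theorem commute_map_iff_of_spectralRadius_eq (hA : (⊥ : Ideal A).jacobson = ⊥)
    {ι : Type*} (n : ι → ℕ) (π : ∀ i, B →ₐ[ℂ] Matrix (Fin (n i)) (Fin (n i)) ℂ)
    (hπcont : ∀ i, Continuous (π i)) (hπsurj : ∀ i, Function.Surjective (π i))
    (hsep : ∀ b : B, (∀ i, π i b = 0) → b = 0)
    (T : A →ₗ[ℂ] B) (hT : Function.Surjective T)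
    (hρ : ∀ a : A, spectralRadius ℂ (T a) = spectralRadius ℂ a) (x y : A) :
    Commute (T x) (T y) ↔ Commute x y := by
  have hinj := injective_of_spectralRadius_eq hA T hρ
  choose br hbr halt hsq hcube using fun i =>
    exists_bracket_of_spectralRadius_eq (π i) T (hπsurj i) hT hρ
  have hcomm : ∀ x y, (∀ i, br i (π i (T x)) (π i (T y)) = 0) → Commute x y := by
    intro x y h
    rw [commute_iff_eq, ← sub_eq_zero]
    refine (injective_iff_map_eq_zero T).1 hinj _ (hsep _ fun i => ?_)
    rw [← hbr, h]
  refine ⟨fun h => hcomm x y fun i => ?_, fun h => ?_⟩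
  · refine Matrix.bracket_eq_zero_of_commute (br i) (halt i) (hsq i) (hcube i) ?_
    rw [← map_mul, h.eq, map_mul]
  · have hne : ∀ i, br i ≠ 0 → π i (T x) * π i (T y) = π i (T y) * π i (T x) := fun i hi =>
      Matrix.commute_of_bracket_eq_zero (br i) (halt i) (hsq i) (hcube i) hi (by
        rw [hbr, h.eq, sub_self, map_zero, map_zero])
    let I : TwoSidedIdeal B := ⨅ i : {i // br i ≠ 0}, TwoSidedIdeal.ker (π i)
    have hmem : ∀ b, b ∈ I ↔ ∀ i, br i ≠ 0 → π i b = 0 := by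
      intro b
      simp [I, TwoSidedIdeal.mem_iInf, TwoSidedIdeal.mem_ker]
    have hI : ∀ s, T s ∈ I → ∀ w, Commute s w := by
      intro s hs w
      refine hcomm s w fun i => ?_
      by_cases hi : br i = 0
      · rw [hi, LinearMap.zero_apply, LinearMap.zero_apply]
      · rw [(hmem _).1 hs i hi, map_zero, LinearMap.zero_apply]
    rw [commute_iff_eq, ← sub_eq_zero]
    refine hsep _ fun j => ?_
    by_cases hj : ∀ b ∈ I, π j b = 0
    · refine hj _ ((hmem _).2 fun i hi => ?_)
      rw [map_sub, map_mul, map_mul, hne i hi, sub_self]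
    · push Not at hj
      obtain ⟨b, hbI, hb⟩ := hj
      have h1 := commute_of_ideal_map_central (π j) (hπsurj j)
        (fun y hy X => commute_of_forall_commute_preimage (π j) T (hπsurj j) (hπcont j) hT hρ
          hI hy X) hbI hb (π j (T x)) (π j (T y))
      rw [map_sub, map_mul, map_mul, h1.eq, sub_self]

end SpectralIsometry

/-- Under the hypotheses of the main theorem, the image under `T` of the
double commutant of a single element `a ∈ A` is a closed unital subalgebra of `B`;
in particular it is closed under multiplication. -/
theorem image_of_double_commutant_is_closed_subalgebra
    {A B : Type*} [NormedRing A] [NormedAlgebra ℂ A] [CompleteSpace A]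
    [NormedRing B] [NormedAlgebra ℂ B] [CompleteSpace B]
    (hA : (⊥ : Ideal A).jacobson = ⊥)
    {ι : Type*} (n : ι → ℕ) (hn : ∀ i, 0 < n i)
    (π : ∀ i, B →ₐ[ℂ] Matrix (Fin (n i)) (Fin (n i)) ℂ)
    (hπcont : ∀ i, Continuous (π i))
    (hπsurj : ∀ i, Function.Surjective (π i))
    (hsep : ∀ b : B, (∀ i, π i b = 0) → b = 0)
    (T : A →ₗ[ℂ] B) (hTsurj : Function.Surjective T) (hT1 : T 1 = 1)
    (hρ : ∀ a : A, spectralRadius ℂ (T a) = spectralRadius ℂ a)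
    (a : A) :
    IsClosed (T '' Set.centralizer (Set.centralizer {a})) ∧
      (1 : B) ∈ T '' Set.centralizer (Set.centralizer {a}) ∧
      ∀ b₁ ∈ T '' Set.centralizer (Set.centralizer {a}),
        ∀ b₂ ∈ T '' Set.centralizer (Set.centralizer {a}),
          b₁ * b₂ ∈ T '' Set.centralizer (Set.centralizer {a}) := by
  have hiff := commute_map_iff_of_spectralRadius_eq hA n π hπcont hπsurj hsep T hTsurj hρ
  have hcent : ∀ (S : Set A) (x : A),
      T x ∈ Set.centralizer (T '' S) ↔ x ∈ Set.centralizer S := by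
    intro S x
    simp only [Set.mem_centralizer_iff, Set.forall_mem_image]
    exact forall₂_congr fun s _ => hiff s x
  have himage : ∀ S : Set A, T '' Set.centralizer S = Set.centralizer (T '' S) := by
    intro S
    ext b
    obtain ⟨x, rfl⟩ := hTsurj b
    rw [hcent]
    refine ⟨?_, fun hx => ⟨x, hx, rfl⟩⟩
    rintro ⟨z, hz, hzx⟩
    rw [← hcent, ← hzx]
    exact (hcent S z).2 hz
  rw [himage]
  exact ⟨Set.isClosed_centralizer _, Set.one_mem_centralizer, fun b₁ h₁ b₂ h₂ =>
    Set.mul_mem_centralizer h₁ h₂⟩
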